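/- arXiv:0805.1717 — 7 statements merged into one kernel-verified Lean document; each statement's English description precedes it below -/
import Mathlib

section
/- There exists exactly one function F : [0,∞) → ℝ that is continuous, nondecreasing, satisfies F(0) = 0 and F(x) → 1 as x → ∞, and satisfies the functional equations 2·F(x) = F(x−1) + 1 for all x ≥ 1 and 2·F(x) = F(x/(1−x)) for all 0 ≤ x < 1. -/
open Set Filter

/-- The defining properties of the Minkowski question mark distribution function on `[0,∞)`. -/
def IsMinkowskiQuestionMark (F : ℝ → ℝ) : Prop :=
  ContinuousOn F (Set.Ici 0) ∧ MonotoneOn F (Set.Ici 0) ∧ F 0 = 0 ∧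
    Filter.Tendsto F Filter.atTop (nhds 1) ∧
    (∀ x : ℝ, 1 ≤ x → 2 * F x = F (x - 1) + 1) ∧
    (∀ x : ℝ, 0 ≤ x → x < 1 → 2 * F x = F (x / (1 - x)))

namespace IsMinkowskiQuestionMark

theorem mem_Icc {F : ℝ → ℝ} (hF : IsMinkowskiQuestionMark F) {x : ℝ} (hx : 0 ≤ x) :
    F x ∈ Icc (0 : ℝ) 1 := by
  obtain ⟨-, hmono, h0, hlim, -, -⟩ := hF
  refine ⟨h0 ▸ hmono (mem_Ici.2 le_rfl) hx hx, ge_of_tendsto hlim ?_⟩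
  filter_upwards [eventually_ge_atTop x] with y hy
  exact hmono hx (mem_Ici.2 (hx.trans hy)) hy

theorem abs_sub_le {F₁ F₂ : ℝ → ℝ} (h₁ : IsMinkowskiQuestionMark F₁)
    (h₂ : IsMinkowskiQuestionMark F₂) (n : ℕ) :
    ∀ x : ℝ, 0 ≤ x → |F₁ x - F₂ x| ≤ (1 / 2) ^ n := by
  induction n with
  | zero =>
    intro x hx
    have a := h₁.mem_Icc hx
    have b := h₂.mem_Icc hx
    rw [pow_zero, abs_le]
    constructor <;> linarith [a.1, a.2, b.1, b.2]
  | succ n ih =>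
    intro x hx
    obtain ⟨-, -, -, -, hge₁, hlt₁⟩ := h₁
    obtain ⟨-, -, -, -, hge₂, hlt₂⟩ := h₂
    rw [pow_succ, abs_le]
    rcases le_or_gt 1 x with h | h
    · have := abs_le.1 (ih (x - 1) (by linarith))
      constructor <;> linarith [this.1, this.2, hge₁ x h, hge₂ x h]
    · have := abs_le.1 (ih (x / (1 - x)) (div_nonneg hx (by linarith)))
      constructor <;> linarith [this.1, this.2, hlt₁ x hx h, hlt₂ x hx h]

theorem eqOn {F₁ F₂ : ℝ → ℝ} (h₁ : IsMinkowskiQuestionMark F₁)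
    (h₂ : IsMinkowskiQuestionMark F₂) : EqOn F₁ F₂ (Ici 0) := by
  intro x hx
  have hlim : Tendsto (fun n : ℕ => ((1 : ℝ) / 2) ^ n) atTop (nhds 0) :=
    tendsto_pow_atTop_nhds_zero_of_lt_one (by norm_num) (by norm_num)
  have := ge_of_tendsto' hlim fun n => abs_sub_le h₁ h₂ n x hx
  exact sub_eq_zero.1 (abs_nonpos_iff.1 this)

end IsMinkowskiQuestionMark

namespace MinkowskiQuestionMark

/-- The left branch of the Farey map, `t ↦ t / (1 - t)`, continued linearly beyond `1 / 2`. -/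
noncomputable def fareyBranch (t : ℝ) : ℝ := t / max (1 - t) (1 / 2)

theorem max_pos (t : ℝ) : 0 < max (1 - t) (1 / 2) :=
  lt_max_of_lt_right (by norm_num)

theorem continuous_fareyBranch : Continuous fareyBranch :=
  continuous_id.div (by fun_prop) fun t => (max_pos t).ne'

theorem monotone_fareyBranch : Monotone fareyBranch := by
  intro a b hab
  unfold fareyBranch
  rw [div_le_div_iff₀ (max_pos a) (max_pos b)]
  rcases max_cases (1 - a) (1 / 2) with ⟨ha, ha'⟩ | ⟨ha, ha'⟩ <;>
    rcases max_cases (1 - b) (1 / 2) with ⟨hb, hb'⟩ | ⟨hb, hb'⟩ <;> rw [ha, hb] <;> nlinarith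

theorem fareyBranch_nonpos {t : ℝ} (ht : t ≤ 0) : fareyBranch t ≤ 0 :=
  div_nonpos_of_nonpos_of_nonneg ht (max_pos t).le

theorem one_le_fareyBranch {t : ℝ} (ht : 1 / 2 ≤ t) : 1 ≤ fareyBranch t := by
  unfold fareyBranch
  rw [one_le_div (max_pos t)]
  exact max_le (by linarith) ht

theorem fareyBranch_of_le {t : ℝ} (ht : t ≤ 1 / 2) : fareyBranch t = t / (1 - t) := by
  unfold fareyBranch
  rw [max_eq_left (by linarith)]

/-- The averaging operator over the two Farey branches, whose fixed point is the question mark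
function on `[0, 1]`. -/
noncomputable def fareyAverage (G : ℝ → ℝ) (t : ℝ) : ℝ :=
  (G (fareyBranch t) + G (1 - fareyBranch (1 - t))) / 2

/-- Distribution functions of probability measures on `[0, 1]` without atoms. -/
structure IsContinuousCDF (G : ℝ → ℝ) : Prop where
  continuous : Continuous G
  monotone : Monotone G
  eq_zero : ∀ t ≤ 0, G t = 0
  eq_one : ∀ t, 1 ≤ t → G t = 1

namespace IsContinuousCDF

variable {G H : ℝ → ℝ}

theorem fareyAverage_of_le (hG : IsContinuousCDF G) {t : ℝ} (ht : t ≤ 1 / 2) :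
    fareyAverage G t = G (fareyBranch t) / 2 := by
  have : 1 ≤ fareyBranch (1 - t) := one_le_fareyBranch (by linarith)
  rw [fareyAverage, hG.eq_zero (1 - fareyBranch (1 - t)) (by linarith), add_zero]

theorem fareyAverage_of_ge (hG : IsContinuousCDF G) {t : ℝ} (ht : 1 / 2 ≤ t) :
    fareyAverage G t = (1 + G (1 - fareyBranch (1 - t))) / 2 := by
  rw [fareyAverage, hG.eq_one _ (one_le_fareyBranch ht)]

theorem fareyAverage (hG : IsContinuousCDF G) : IsContinuousCDF (fareyAverage G) where
  continuous := by
    have hc := hG.continuous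
    have hb := continuous_fareyBranch
    unfold MinkowskiQuestionMark.fareyAverage
    fun_prop
  monotone a b hab := by
    have h₁ := hG.monotone (monotone_fareyBranch hab)
    have h₂ := hG.monotone (sub_le_sub_left (monotone_fareyBranch (sub_le_sub_left hab 1)) 1)
    unfold MinkowskiQuestionMark.fareyAverage
    linarith
  eq_zero t ht := by
    rw [hG.fareyAverage_of_le (by linarith), hG.eq_zero _ (fareyBranch_nonpos ht), zero_div]
  eq_one t ht := by
    have : fareyBranch (1 - t) ≤ 0 := fareyBranch_nonpos (by linarith)
    rw [hG.fareyAverage_of_ge (by linarith), hG.eq_one _ (by linarith)]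
    norm_num

theorem mem_Icc (hG : IsContinuousCDF G) (t : ℝ) : G t ∈ Icc (0 : ℝ) 1 := by
  constructor
  · rw [← hG.eq_zero (min t 0) (min_le_right _ _)]
    exact hG.monotone (min_le_left _ _)
  · rw [← hG.eq_one (max t 1) (le_max_right _ _)]
    exact hG.monotone (le_max_left _ _)

theorem dist_fareyAverage_le (hG : IsContinuousCDF G) (hH : IsContinuousCDF H) {C : ℝ}
    (hC : ∀ t, dist (G t) (H t) ≤ C) (t : ℝ) :
    dist (MinkowskiQuestionMark.fareyAverage G t) (MinkowskiQuestionMark.fareyAverage H t)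
      ≤ C / 2 := by
  simp only [Real.dist_eq, abs_le] at hC ⊢
  rcases le_total t (1 / 2) with ht | ht
  · rw [hG.fareyAverage_of_le ht, hH.fareyAverage_of_le ht]
    have := hC (fareyBranch t)
    constructor <;> linarith [this.1, this.2]
  · rw [hG.fareyAverage_of_ge ht, hH.fareyAverage_of_ge ht]
    have := hC (1 - fareyBranch (1 - t))
    constructor <;> linarith [this.1, this.2]

theorem iterate_fareyAverage (hG : IsContinuousCDF G) (n : ℕ) :
    IsContinuousCDF (MinkowskiQuestionMark.fareyAverage^[n] G) := by
  induction n with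
  | zero => exact hG
  | succ n ih =>
    rw [Function.iterate_succ_apply']
    exact ih.fareyAverage

theorem dist_iterate_fareyAverage_le (hG : IsContinuousCDF G) (n : ℕ) :
    ∀ t, dist (MinkowskiQuestionMark.fareyAverage^[n] G t)
      (MinkowskiQuestionMark.fareyAverage^[n + 1] G t) ≤ 2 / 2 / 2 ^ n := by
  induction n with
  | zero =>
    intro t
    have a := hG.mem_Icc t
    have b := hG.fareyAverage.mem_Icc t
    simp only [Function.iterate_zero, id, zero_add, Function.iterate_one, pow_zero,
      Real.dist_eq, abs_le]
    constructor <;> linarith [a.1, a.2, b.1, b.2]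
  | succ n ih =>
    intro t
    rw [Function.iterate_succ_apply', Function.iterate_succ_apply' _ (n + 1)]
    refine ((hG.iterate_fareyAverage n).dist_fareyAverage_le
      (hG.iterate_fareyAverage (n + 1)) ih t).trans_eq ?_
    rw [pow_succ, div_div]

end IsContinuousCDF

theorem isContinuousCDF_clamp : IsContinuousCDF fun t : ℝ => max 0 (min t 1) where
  continuous := by fun_prop
  monotone a b hab := max_le_max le_rfl (min_le_min hab le_rfl)
  eq_zero t ht := max_eq_left ((min_le_left _ _).trans ht)
  eq_one t ht := by simp [ht]

theorem exists_fareyAverage_eq_self :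
    ∃ G : ℝ → ℝ, IsContinuousCDF G ∧ ∀ t, fareyAverage G t = G t := by
  set u : ℕ → ℝ → ℝ := fun n => fareyAverage^[n] fun t : ℝ => max 0 (min t 1)
  have hu : ∀ n, IsContinuousCDF (u n) := isContinuousCDF_clamp.iterate_fareyAverage
  have hdist : ∀ n t, dist (u n t) (u (n + 1) t) ≤ 2 / 2 / 2 ^ n :=
    isContinuousCDF_clamp.dist_iterate_fareyAverage_le
  choose G hG using fun t => cauchySeq_tendsto_of_complete
    (cauchySeq_of_le_geometric_two fun n => hdist n t)
  have hunif : TendstoUniformly u G atTop := by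
    have hlim : Tendsto (fun n : ℕ => (2 : ℝ) / 2 ^ n) atTop (nhds 0) :=
      tendsto_const_nhds.div_atTop (tendsto_pow_atTop_atTop_of_one_lt (by norm_num))
    rw [Metric.tendstoUniformly_iff]
    intro ε hε
    filter_upwards [hlim.eventually_lt_const hε] with n hn t
    rw [dist_comm]
    exact (dist_le_of_le_geometric_two_of_tendsto (fun n => hdist n t) (hG t) n).trans_lt hn
  refine ⟨G, ⟨?_, ?_, ?_, ?_⟩, ?_⟩
  · exact hunif.continuous (Frequently.of_forall fun n => (hu n).continuous)
  · exact fun a b hab => le_of_tendsto_of_tendsto' (hG a) (hG b) fun n => (hu n).monotone hab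
  · exact fun t ht => tendsto_nhds_unique (hG t)
      (tendsto_const_nhds.congr fun n => ((hu n).eq_zero t ht).symm)
  · exact fun t ht => tendsto_nhds_unique (hG t)
      (tendsto_const_nhds.congr fun n => ((hu n).eq_one t ht).symm)
  · intro t
    refine tendsto_nhds_unique ?_ ((tendsto_add_atTop_iff_nat 1).2 (hG t))
    refine Tendsto.congr (fun n => ?_) (((hG _).add (hG _)).div_const 2)
    simp only [u, Function.iterate_succ_apply']
    rfl

theorem isMinkowskiQuestionMark_of_fareyAverage_eq_self {G : ℝ → ℝ} (hG : IsContinuousCDF G)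
    (hfix : ∀ t, fareyAverage G t = G t) :
    IsMinkowskiQuestionMark fun x => G (1 - 1 / (1 + x)) := by
  refine ⟨?_, ?_, ?_, ?_, ?_, ?_⟩
  · refine hG.continuous.comp_continuousOn (continuousOn_const.sub
      (continuousOn_const.div (by fun_prop) fun x hx => ?_))
    have : (0 : ℝ) ≤ x := hx
    positivity
  · intro a ha b _ hab
    have : (0 : ℝ) ≤ a := ha
    exact hG.monotone (sub_le_sub_left (one_div_le_one_div_of_le (by positivity) (by linarith)) 1)
  · exact hG.eq_zero _ (by norm_num)
  · have hlim : Tendsto (fun x : ℝ => 1 - 1 / (1 + x)) atTop (nhds (1 - 0)) :=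
      tendsto_const_nhds.sub
        (tendsto_const_nhds.div_atTop (tendsto_atTop_add_const_left _ _ tendsto_id))
    have := (hG.continuous.tendsto _).comp hlim
    rwa [sub_zero, hG.eq_one 1 le_rfl] at this
  · intro x hx
    have hle : 1 / (1 + x) ≤ 1 / 2 := one_div_le_one_div_of_le (by norm_num) (by linarith)
    have harg : 1 - fareyBranch (1 - (1 - 1 / (1 + x))) = 1 - 1 / (1 + (x - 1)) := by
      rw [sub_sub_cancel, fareyBranch_of_le hle]
      have : 1 + x ≠ 0 := by positivity
      have : x ≠ 0 := by positivity
      have : 1 - 1 / (1 + x) = x / (1 + x) := by field_simp; ring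
      rw [this, add_sub_cancel]
      field_simp
    have := hfix (1 - 1 / (1 + x))
    rw [hG.fareyAverage_of_ge (by linarith), harg] at this
    linarith
  · intro x hx hx1
    have hle : 1 / 2 ≤ 1 / (1 + x) := one_div_le_one_div_of_le (by positivity) (by linarith)
    have harg : fareyBranch (1 - 1 / (1 + x)) = 1 - 1 / (1 + x / (1 - x)) := by
      rw [fareyBranch_of_le (by linarith)]
      have h₁ : 1 + x ≠ 0 := by positivity
      have h₂ : 1 - x ≠ 0 := by linarith
      have h₃ : 1 + x / (1 - x) = 1 / (1 - x) := by field_simp; ring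
      rw [h₃, sub_sub_cancel, one_div_one_div]
      field_simp
      ring
    have := hfix (1 - 1 / (1 + x))
    rw [hG.fareyAverage_of_le (by linarith), harg] at this
    linarith

end MinkowskiQuestionMark

theorem exists_unique_minkowski_question_mark :
    (∃ F : ℝ → ℝ, IsMinkowskiQuestionMark F) ∧
    (∀ F₁ F₂ : ℝ → ℝ, IsMinkowskiQuestionMark F₁ → IsMinkowskiQuestionMark F₂ →
      Set.EqOn F₁ F₂ (Set.Ici 0)) := by
  obtain ⟨G, hG, hfix⟩ := MinkowskiQuestionMark.exists_fareyAverage_eq_self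
  exact ⟨⟨_, MinkowskiQuestionMark.isMinkowskiQuestionMark_of_fareyAverage_eq_self hG hfix⟩,
    fun _ _ h₁ h₂ => h₁.eqOn h₂⟩
end

section
/- F(x) + F(1/x) = 1 for all real x > 0. -/
open Set Filter

/-- The defect `F x + F (1 / x) - 1` of the reflection symmetry is halved by `x ↦ x - 1`. -/
lemma two_mul_symmetry_defect {F : ℝ → ℝ}
    (hfe1 : ∀ x : ℝ, 1 ≤ x → 2 * F x = F (x - 1) + 1)
    (hfe2 : ∀ x : ℝ, 0 ≤ x → x < 1 → 2 * F x = F (x / (1 - x))) {x : ℝ} (hx : 1 < x) :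
    2 * (F x + F (1 / x) - 1) = F (x - 1) + F (1 / (x - 1)) - 1 := by
  have hx0 : 0 < x := by linarith
  have hinv := hfe2 (1 / x) (by positivity) ((div_lt_one hx0).2 hx)
  have harg : 1 / x / (1 - 1 / x) = 1 / (x - 1) := by
    rw [one_sub_div hx0.ne', div_div_div_cancel_right₀ hx0.ne']
  rw [harg] at hinv
  linarith [hfe1 x hx.le]

theorem minkowski_question_mark_symmetry (F : ℝ → ℝ)
    (hcont : ContinuousOn F (Set.Ici 0))
    (hmono : MonotoneOn F (Set.Ici 0))
    (h0 : F 0 = 0)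
    (hlim : Filter.Tendsto F Filter.atTop (nhds 1))
    (hfe1 : ∀ x : ℝ, 1 ≤ x → 2 * F x = F (x - 1) + 1)
    (hfe2 : ∀ x : ℝ, 0 ≤ x → x < 1 → 2 * F x = F (x / (1 - x))) :
    ∀ x : ℝ, 0 < x → F x + F (1 / x) = 1 := by
  have nonneg : ∀ x, 0 ≤ x → 0 ≤ F x := fun x hx =>
    h0 ▸ hmono Set.self_mem_Ici hx hx
  have le_one : ∀ x, 0 ≤ x → F x ≤ 1 := fun x hx =>
    ge_of_tendsto hlim ((eventually_ge_atTop x).mono fun y hy => hmono hx (hx.trans hy) hy)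
  have at_one : 2 * F 1 = 1 := by simpa [h0] using hfe1 1 le_rfl
  have bound : ∀ n : ℕ, ∀ x, 0 < x → |F x + F (1 / x) - 1| ≤ (1 / 2) ^ n := by
    intro n
    induction n with
    | zero =>
      intro x hx
      have hx' : 0 ≤ 1 / x := by positivity
      rw [pow_zero, abs_le]
      constructor <;> linarith [nonneg x hx.le, le_one x hx.le, nonneg _ hx', le_one _ hx']
    | succ n ih =>
      have of_one_lt : ∀ x, 1 < x → |F x + F (1 / x) - 1| ≤ (1 / 2) ^ (n + 1) := by
        intro x hx
        have hstep := ih (x - 1) (by linarith)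
        rw [← two_mul_symmetry_defect hfe1 hfe2 hx, abs_mul, abs_two] at hstep
        rw [pow_succ]
        linarith
      intro x hx
      rcases lt_trichotomy x 1 with h | rfl | h
      · have hswap := of_one_lt (1 / x) ((one_lt_div hx).2 h)
        rwa [one_div_one_div, add_comm (F (1 / x))] at hswap
      · have hzero : F 1 + F (1 / 1) - 1 = 0 := by
          rw [div_one]
          linarith
        rw [hzero, abs_zero]
        positivity
      · exact of_one_lt x h
  intro x hx
  have hpow : Tendsto (fun n : ℕ => (1 / 2 : ℝ) ^ n) atTop (nhds 0) :=
    tendsto_pow_atTop_nhds_zero_of_lt_one (by norm_num) (by norm_num)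
  have hle : |F x + F (1 / x) - 1| ≤ 0 := ge_of_tendsto' hpow fun n => bound n x hx
  linarith [abs_nonpos_iff.1 hle]
end

section
/- For every real p with 1 < p < 2 there exists a continuous nondecreasing function F_p : ℝ → ℝ such that F_p(x) = 0 for all x ≤ p−1, F_p(x) = 1 for all x ≥ 1/(p−1), 2·F_p(x) = F_p(p·x − 1) + 1 for all 1 ≤ x ≤ 1/(p−1), 2·F_p(x) = F_p(x/(p−x)) for all p−1 ≤ x ≤ 1, and F_p(x) + F_p(1/x) = 1 for all x > 0. -/
open Set Function BoundedContinuousFunction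
open scoped NNReal

namespace PMinkowski

/-- The bounded continuous distribution functions of measures supported on `[l, r]`. -/
def distributionFunctions (l r : ℝ) : Set (ℝ →ᵇ ℝ) :=
  {F | Monotone F ∧ (∀ x ≤ l, F x = 0) ∧ ∀ x, r ≤ x → F x = 1}

lemma isClosed_distributionFunctions (l r : ℝ) : IsClosed (distributionFunctions l r) := by
  have eval_cont (x : ℝ) : Continuous fun F : ℝ →ᵇ ℝ => F x := continuous_eval_const x
  simp only [distributionFunctions, Monotone, ofPred_and, ofPred_forall]
  refine .inter ?_ (.inter ?_ ?_)
  · exact isClosed_iInter fun x => isClosed_iInter fun y => isClosed_iInter fun _ =>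
      isClosed_le (eval_cont x) (eval_cont y)
  · exact isClosed_iInter fun x => isClosed_iInter fun _ =>
      isClosed_eq (eval_cont x) continuous_const
  · exact isClosed_iInter fun x => isClosed_iInter fun _ =>
      isClosed_eq (eval_cont x) continuous_const

lemma distributionFunctions_nonempty {l r : ℝ} (h : l < r) :
    (distributionFunctions l r).Nonempty := by
  have hpos : 0 < r - l := sub_pos.2 h
  refine ⟨.ofNormedAddCommGroup (fun x => max 0 (min 1 ((x - l) / (r - l)))) (by fun_prop) 1
    fun x => ?_, fun x y hxy => ?_, fun x hx => ?_, fun x hx => ?_⟩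
  · rw [Real.norm_of_nonneg (le_max_left _ _)]
    exact max_le zero_le_one (min_le_left _ _)
  · simp only [coe_ofNormedAddCommGroup]
    gcongr
  · have : (x - l) / (r - l) ≤ 0 := div_nonpos_of_nonpos_of_nonneg (by linarith) hpos.le
    exact max_eq_left ((min_le_right _ _).trans this)
  · have : 1 ≤ (x - l) / (r - l) := (one_le_div hpos).2 (by linarith)
    simp [min_eq_left this]

/-- The average of the pullbacks of `F` along `a` and `b`. -/
noncomputable def average (a b : C(ℝ, ℝ)) (F : ℝ →ᵇ ℝ) : ℝ →ᵇ ℝ :=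
  (2⁻¹ : ℝ) • (F.compContinuous a + F.compContinuous b)

lemma average_apply (a b : C(ℝ, ℝ)) (F : ℝ →ᵇ ℝ) (x : ℝ) :
    average a b F x = (F (a x) + F (b x)) / 2 := by
  simp [average]; ring

/-- If at each point `a` has already reached `r` or `b` has not yet left `l`, then averaging along
`a` and `b` has a fixed point among the distribution functions supported on `[l, r]`. -/
lemma exists_average_eq_self {l r c : ℝ} (h : l < r) (a b : C(ℝ, ℝ))
    (ha : Monotone a) (hb : Monotone b)
    (hal : ∀ x ≤ l, a x ≤ l) (hbl : ∀ x ≤ c, b x ≤ l)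
    (har : ∀ x, c ≤ x → r ≤ a x) (hbr : ∀ x, r ≤ x → r ≤ b x) (hlc : l ≤ c) (hcr : c ≤ r) :
    ∃ F ∈ distributionFunctions l r, average a b F = F := by
  have maps : MapsTo (average a b) (distributionFunctions l r) (distributionFunctions l r) := by
    rintro F ⟨hm, h0, h1⟩
    refine ⟨fun x y hxy => ?_, fun x hx => ?_, fun x hx => ?_⟩
    · rw [average_apply, average_apply]
      linarith [hm (ha hxy), hm (hb hxy)]
    · rw [average_apply, h0 _ (hal x hx), h0 _ (hbl x (hx.trans hlc))]; simp
    · rw [average_apply, h1 _ (har x (hcr.trans hx)), h1 _ (hbr x hx)]; norm_num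
  have contr : ContractingWith (2⁻¹ : ℝ≥0) (maps.restrict _ _ _) := by
    refine ⟨by norm_num, LipschitzWith.of_dist_le_mul ?_⟩
    rintro ⟨F, hF⟩ ⟨G, hG⟩
    rw [Subtype.dist_eq, Subtype.dist_eq]
    simp only [MapsTo.val_restrict_apply]
    refine (dist_le (by positivity)).2 fun x => ?_
    rw [average_apply, average_apply, Real.dist_eq]
    push_cast
    rcases le_total x c with hx | hx
    · rw [hF.2.1 _ (hbl x hx), hG.2.1 _ (hbl x hx)]
      have := dist_coe_le_dist (f := F) (g := G) (a x)
      rw [Real.dist_eq] at this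
      rw [show (F (a x) + 0) / 2 - (G (a x) + 0) / 2 = 2⁻¹ * (F (a x) - G (a x)) by ring,
        abs_mul, abs_of_pos (by norm_num)]
      gcongr
    · rw [hF.2.2 _ (har x hx), hG.2.2 _ (har x hx)]
      have := dist_coe_le_dist (f := F) (g := G) (b x)
      rw [Real.dist_eq] at this
      rw [show (1 + F (b x)) / 2 - (1 + G (b x)) / 2 = 2⁻¹ * (F (b x) - G (b x)) by ring,
        abs_mul, abs_of_pos (by norm_num)]
      gcongr
  obtain ⟨F₀, hF₀⟩ := distributionFunctions_nonempty h
  obtain ⟨F, hF, hfix, -⟩ := contr.exists_fixedPoint'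
    (isClosed_distributionFunctions l r).isComplete maps hF₀ (edist_ne_top _ _)
  exact ⟨F, hF, hfix⟩

/-- The functional equations force the symmetry of `F` under inversion. -/
lemma add_apply_inv_eq_one {p : ℝ} (hp : 1 < p) {F : ℝ → ℝ} (hF : ∀ x, F x ∈ Icc 0 1)
    (hge : ∀ x, 1 ≤ x → 2 * F x = F (p * x - 1) + 1)
    (hle : ∀ x, x ≤ 1 → 2 * F x = F (x / (p - x))) {x : ℝ} (hx : 0 < x) :
    F x + F x⁻¹ = 1 := by
  have key (n : ℕ) : ∀ x, 0 < x → |F x + F x⁻¹ - 1| ≤ (1 / 2) ^ n := by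
    induction n with
    | zero =>
      intro x _
      rw [pow_zero, abs_le]
      constructor <;> linarith [(hF x).1, (hF x).2, (hF x⁻¹).1, (hF x⁻¹).2]
    | succ n ih =>
      have large (x : ℝ) (hx : 1 ≤ x) : |F x + F x⁻¹ - 1| ≤ (1 / 2) ^ (n + 1) := by
        have hx0 : 0 < x := by linarith
        have hpx : 0 < p * x - 1 := by nlinarith
        have e := hle x⁻¹ (inv_le_one_of_one_le₀ hx)
        have hinv : x⁻¹ / (p - x⁻¹) = (p * x - 1)⁻¹ := by
          have : p - x⁻¹ = (p * x - 1) * x⁻¹ := by field_simp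
          rw [this]; field_simp
        rw [hinv] at e
        have := ih _ hpx
        rw [abs_le] at this ⊢
        rw [pow_succ]
        constructor <;> linarith [hge x hx, this.1, this.2]
      intro x hx
      rcases le_total 1 x with h | h
      · exact large x h
      · have := large x⁻¹ ((one_le_inv₀ hx).2 h)
        rwa [inv_inv, add_comm (F x⁻¹)] at this
  have lim := tendsto_pow_atTop_nhds_zero_of_lt_one (r := (1 / 2 : ℝ)) (by norm_num) (by norm_num)
  have := abs_nonpos_iff.1 (ge_of_tendsto' lim fun n => key n x hx)
  linarith

end PMinkowski

open PMinkowski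

theorem exists_p_minkowski_question_mark (p : ℝ) (hp1 : 1 < p) (hp2 : p < 2) :
    ∃ F : ℝ → ℝ, Continuous F ∧ Monotone F ∧
      (∀ x : ℝ, x ≤ p - 1 → F x = 0) ∧
      (∀ x : ℝ, 1 / (p - 1) ≤ x → F x = 1) ∧
      (∀ x : ℝ, 1 ≤ x → x ≤ 1 / (p - 1) → 2 * F x = F (p * x - 1) + 1) ∧
      (∀ x : ℝ, p - 1 ≤ x → x ≤ 1 → 2 * F x = F (x / (p - x))) ∧
      (∀ x : ℝ, 0 < x → F x + F (1 / x) = 1) := by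
  have hp : 0 < p - 1 := by linarith
  have hr : 1 < 1 / (p - 1) := (one_lt_div hp).2 (by linarith)
  have den_pos (x : ℝ) : 0 < p - min x 1 := by linarith [min_le_right x 1]
  let a : C(ℝ, ℝ) := ⟨fun x => min x 1 / (p - min x 1), by
    fun_prop (disch := exact fun x => (den_pos x).ne')⟩
  let b : C(ℝ, ℝ) := ⟨fun x => p * max x 1 - 1, by fun_prop⟩
  have a_one (x : ℝ) (hx : 1 ≤ x) : a x = 1 / (p - 1) := by simp [a, min_eq_right hx]
  have b_one (x : ℝ) (hx : x ≤ 1) : b x = p - 1 := by simp [b, max_eq_right hx]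
  obtain ⟨F, ⟨hm, h0, h1⟩, hfix⟩ := exists_average_eq_self (l := p - 1) (r := 1 / (p - 1)) (c := 1)
    (by linarith) a b
    (fun x y hxy => by
      have hmin : min x 1 ≤ min y 1 := min_le_min_right 1 hxy
      change min x 1 / (p - min x 1) ≤ min y 1 / (p - min y 1)
      rw [div_le_div_iff₀ (den_pos x) (den_pos y)]
      nlinarith)
    (fun x y hxy => by
      have hmax : max x 1 ≤ max y 1 := max_le_max_right 1 hxy
      change p * max x 1 - 1 ≤ p * max y 1 - 1
      gcongr)
    (fun x hx => by
      change min x 1 / (p - min x 1) ≤ p - 1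
      rw [div_le_iff₀ (den_pos x), min_eq_left (by linarith)]
      nlinarith)
    (fun x hx => (b_one x hx).le)
    (fun x hx => (a_one x hx).ge)
    (fun x hx => by
      change 1 / (p - 1) ≤ p * max x 1 - 1
      rw [max_eq_left (by linarith)]
      rw [div_le_iff₀ hp] at hx ⊢
      nlinarith)
    (by linarith) hr.le
  have fix (x : ℝ) : 2 * F x = F (a x) + F (b x) := by
    have := average_apply a b F x
    rw [hfix] at this
    linarith
  have hge (x : ℝ) (hx : 1 ≤ x) : 2 * F x = F (p * x - 1) + 1 := by
    rw [fix, a_one x hx, h1 _ le_rfl, add_comm]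
    simp [b, max_eq_left hx]
  have hle (x : ℝ) (hx : x ≤ 1) : 2 * F x = F (x / (p - x)) := by
    rw [fix, b_one x hx, h0 _ le_rfl, add_zero]
    simp [a, min_eq_left hx]
  have mem (x : ℝ) : F x ∈ Icc 0 1 :=
    ⟨(h0 _ (min_le_right x _)).ge.trans (hm (min_le_left x (p - 1))),
      (hm (le_max_left x (1 / (p - 1)))).trans (h1 _ (le_max_right x _)).le⟩
  refine ⟨F, F.continuous, hm, h0, h1, fun x hx _ => hge x hx, fun x _ hx => hle x hx,
    fun x hx => ?_⟩
  rw [one_div]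
  exact add_apply_inv_eq_one hp1 mem hge hle hx
end

section
/- For every real p with 1 < p < 2 there exists a unique continuous function X : [0,∞) → ℝ with X(1) = 1 satisfying X(x+1) = (X(x)+1)/p and X(x/(x+1)) = p·X(x)/(X(x)+1) for all x ≥ 0. Moreover this X is strictly increasing, X(0) = p−1, X(1/x) = 1/X(x) for all x > 0, and X maps [0,∞) onto the half-open interval [p−1, 1/(p−1)). -/
open Set

open Filter Topology

namespace ConjugationMap

/-- Every nonnegative rational is reached from `0` by `x ↦ x + 1` and `x ↦ x / (x + 1)`. -/
theorem nonneg_rat_induction {P : ℝ → Prop} (zero : P 0)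
    (add_one : ∀ x, 0 ≤ x → P x → P (x + 1))
    (div_add_one : ∀ x, 0 ≤ x → P x → P (x / (x + 1))) (q : ℚ) (hq : 0 ≤ q) : P (q : ℝ) := by
  have key : ∀ N m n : ℕ, m + n ≤ N → 0 < n → P ((m : ℝ) / n) := by
    intro N
    induction N with
    | zero => intro m n h hn; omega
    | succ N ih =>
      intro m n h hn
      have hn' : (0 : ℝ) < n := by exact_mod_cast hn
      rcases Nat.eq_zero_or_pos m with rfl | hm
      · simpa using zero
      rcases lt_or_ge m n with hmn | hmn
      · obtain ⟨k, rfl⟩ := Nat.exists_eq_add_of_lt hmn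
        have := div_add_one _ (by positivity) (ih m (k + 1) (by omega) (by omega))
        convert this using 1
        push_cast
        field_simp
        ring
      · obtain ⟨k, rfl⟩ := Nat.exists_eq_add_of_le hmn
        have := add_one _ (by positivity) (ih k n (by omega) hn)
        convert this using 1
        push_cast
        field_simp
        ring
  have h := key _ q.num.toNat q.den le_rfl q.den_pos
  have hnum : ((q.num.toNat : ℕ) : ℝ) = (q.num : ℝ) := by
    exact_mod_cast Int.toNat_of_nonneg (Rat.num_nonneg.mpr hq)
  rwa [hnum, ← Rat.cast_def] at h

theorem eqOn_Ioi_of_rat {F G : ℝ → ℝ} (hF : ContinuousOn F (Ioi 0)) (hG : ContinuousOn G (Ioi 0))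
    (h : ∀ q : ℚ, 0 < q → F q = G q) : EqOn F G (Ioi 0) := by
  refine EqOn.of_subset_closure (s := Ioi 0 ∩ range ((↑) : ℚ → ℝ)) ?_ hF hG inter_subset_left
    (Rat.denseRange_cast.open_subset_closure_inter isOpen_Ioi)
  rintro _ ⟨hx, q, rfl⟩
  exact h q (by simpa using hx)

/-- The values at `x + 1` and `x / (x + 1)` are the images of the value at `x` under the
generators of the `p`-deformed tree. -/
structure IsConjugation (p : ℝ) (X : ℝ → ℝ) : Prop where
  map_one : X 1 = 1
  map_add_one : ∀ x, 0 ≤ x → X (x + 1) = (X x + 1) / p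
  map_div_add_one : ∀ x, 0 ≤ x → X (x / (x + 1)) = p * X x / (X x + 1)

namespace IsConjugation

variable {p : ℝ} {X Y : ℝ → ℝ}

theorem map_zero (hX : IsConjugation p X) (hp : 1 < p) : X 0 = p - 1 := by
  have h := hX.map_add_one 0 le_rfl
  rw [zero_add, hX.map_one, eq_div_iff (by linarith)] at h
  linarith

theorem eqOn (hX : IsConjugation p X) (hY : IsConjugation p Y) (hp : 1 < p)
    (hXc : ContinuousOn X (Ici 0)) (hYc : ContinuousOn Y (Ici 0)) : EqOn Y X (Ici 0) := by
  have h0 : Y 0 = X 0 := by rw [hX.map_zero hp, hY.map_zero hp]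
  have hrat : ∀ q : ℚ, 0 < q → Y q = X q := fun q hq =>
    nonneg_rat_induction (P := fun x => Y x = X x) h0
      (fun x hx h => by simp only [hX.map_add_one x hx, hY.map_add_one x hx, h])
      (fun x hx h => by simp only [hX.map_div_add_one x hx, hY.map_div_add_one x hx, h]) q hq.le
  intro x hx
  rcases eq_or_lt_of_le (mem_Ici.mp hx) with rfl | hx
  · exact h0
  · exact eqOn_Ioi_of_rat (hYc.mono Ioi_subset_Ici_self) (hXc.mono Ioi_subset_Ici_self) hrat hx

theorem map_inv (hX : IsConjugation p X) (hp : 1 < p) (hXc : ContinuousOn X (Ici 0))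
    (hpos : ∀ x, 0 ≤ x → 0 < X x) {x : ℝ} (hx : 0 < x) : X (1 / x) = 1 / X x := by
  have hrat : ∀ q : ℚ, 0 < q → X (1 / (q : ℝ)) = 1 / X q := by
    intro q hq
    refine nonneg_rat_induction (P := fun x => 0 < x → X (1 / x) = 1 / X x)
      (fun h => absurd h (lt_irrefl _)) ?_ ?_ q hq.le (by exact_mod_cast hq)
    · intro x hx ih _
      rcases eq_or_lt_of_le hx with rfl | hx'
      · simp [hX.map_one]
      have h1 : 1 / (x + 1) = (1 / x) / (1 / x + 1) := by field_simp; ring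
      have := hpos x hx
      rw [h1, hX.map_div_add_one _ (by positivity), hX.map_add_one x hx, ih hx']
      field_simp
      ring
    · intro x hx ih hx1
      have hx' : 0 < x := by
        rcases eq_or_lt_of_le hx with rfl | h
        · simp at hx1
        · exact h
      have h1 : 1 / (x / (x + 1)) = 1 / x + 1 := by field_simp; ring
      have := hpos x hx
      rw [h1, hX.map_div_add_one _ hx, hX.map_add_one _ (by positivity), ih hx']
      field_simp
      ring
  have hinv : ContinuousOn (fun x : ℝ => 1 / x) (Ioi 0) :=
    continuousOn_const.div continuousOn_id fun x hx => (mem_Ioi.mp hx).ne'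
  refine eqOn_Ioi_of_rat (F := fun x => X (1 / x)) (G := fun x => 1 / X x)
    (hXc.comp hinv fun x hx => ?_) ?_ hrat hx
  · exact (one_div_pos.mpr (mem_Ioi.mp hx)).le
  · exact continuousOn_const.div (hXc.mono Ioi_subset_Ici_self) fun x hx =>
      (hpos x (mem_Ioi.mp hx).le).ne'

theorem map_lt (hX : IsConjugation p X) (hp1 : 1 < p) (hp2 : p < 2)
    (hmem : ∀ x, 0 ≤ x → X x ∈ Icc (p - 1) (1 / (p - 1))) {x : ℝ} (hx : 0 ≤ x) :
    X x < 1 / (p - 1) := by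
  have hp : 0 < p - 1 := by linarith
  have key : ∀ n : ℕ, ∀ x : ℝ, 0 ≤ x → x < n + 1 → X x < 1 / (p - 1) := by
    intro n
    induction n with
    | zero =>
      intro x hx hx1
      have hx1' : 0 < 1 - x := by norm_num at hx1; linarith
      have hy : 0 ≤ x / (1 - x) := by positivity
      have hxy : x / (1 - x) / (x / (1 - x) + 1) = x := by field_simp; ring
      have h := hX.map_div_add_one _ hy
      rw [hxy] at h
      obtain ⟨h1, h2⟩ := hmem _ hy
      rw [le_div_iff₀ hp] at h2
      rw [h]
      calc p * X (x / (1 - x)) / (X (x / (1 - x)) + 1) ≤ 1 := by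
            rw [div_le_one (by linarith)]; linarith
        _ < 1 / (p - 1) := by rw [lt_div_iff₀ hp]; linarith
    | succ n ih =>
      intro x hx hxn
      rcases lt_or_ge x 1 with h | h
      · exact ih x hx (by have : (0 : ℝ) ≤ n := n.cast_nonneg
                          linarith)
      · have h1 := ih (x - 1) (by linarith) (by push_cast at hxn; linarith)
        have h2 := hX.map_add_one (x - 1) (by linarith)
        rw [sub_add_cancel] at h2
        rw [lt_div_iff₀ hp] at h1 ⊢
        rw [h2, div_mul_eq_mul_div, div_lt_one (by linarith)]
        linarith
  exact key ⌊x⌋₊ x hx (Nat.lt_floor_add_one x)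

theorem strictMonoOn (hX : IsConjugation p X) (hp1 : 1 < p) (hp2 : p < 2)
    (hXc : ContinuousOn X (Ici 0))
    (hmem : ∀ x, 0 ≤ x → X x ∈ Icc (p - 1) (1 / (p - 1))) : StrictMonoOn X (Ici 0) := by
  have hp : 0 < p - 1 := by linarith
  have hpos : ∀ x, 0 ≤ x → 0 < X x := fun x hx => hp.trans_le (hmem x hx).1
  have hlt : ∀ x, 0 ≤ x → X x < 1 / (p - 1) := fun x hx => hX.map_lt hp1 hp2 hmem hx
  have hinv : ∀ x, 0 < x → X (1 / x) = 1 / X x := fun x hx => hX.map_inv hp1 hXc hpos hx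
  have hzero : ∀ b, 0 < b → X 0 < X b := by
    intro b hb
    have h := hlt (1 / b) (by positivity)
    rw [hinv b hb, one_div_lt_one_div (hpos b hb.le) hp] at h
    rwa [hX.map_zero hp1]
  have hrat : ∀ q : ℚ, 0 ≤ q → ∀ b : ℝ, (q : ℝ) < b → X q < X b := by
    refine nonneg_rat_induction (P := fun a => ∀ b : ℝ, a < b → X a < X b) hzero ?_ ?_
    · intro x hx ih b hb
      have h := hX.map_add_one (b - 1) (by linarith)
      rw [sub_add_cancel] at h
      rw [h, hX.map_add_one x hx]
      have := ih (b - 1) (by linarith)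
      gcongr
    · intro x hx ih b hb
      have hx0 : 0 ≤ x / (x + 1) := by positivity
      have hXx := hpos x hx
      rw [hX.map_div_add_one x hx]
      rcases lt_or_ge b 1 with hb1 | hb1
      · have hb1' : 0 < 1 - b := by linarith
        have hb0 : 0 < b := by linarith
        have hxb : b / (1 - b) / (b / (1 - b) + 1) = b := by field_simp; ring
        have hy : 0 ≤ b / (1 - b) := by positivity
        have h := hX.map_div_add_one _ hy
        rw [hxb] at h
        have hlt' := ih (b / (1 - b)) (by
          rw [lt_div_iff₀ hb1']
          rw [div_lt_iff₀ (by linarith)] at hb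
          linarith)
        have hXb := hpos _ hy
        rw [h, div_lt_div_iff₀ (by linarith) (by linarith)]
        nlinarith
      · have h := hX.map_add_one (b - 1) (by linarith)
        rw [sub_add_cancel] at h
        have hb' := (hmem (b - 1) (by linarith)).1
        have hx' := hlt x hx
        rw [lt_div_iff₀ hp] at hx'
        calc p * X x / (X x + 1) < 1 := by rw [div_lt_one (by linarith)]; linarith
          _ ≤ X b := by rw [h, one_le_div (by linarith)]; linarith
  intro a ha b hb hab
  rcases eq_or_lt_of_le (mem_Ici.mp ha) with rfl | ha0
  · exact hzero b hab
  obtain ⟨q, haq, hqb⟩ := exists_rat_btwn hab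
  have hq0 : (0 : ℝ) < q := ha0.trans haq
  have hq0' : 0 < q := by exact_mod_cast hq0
  have h := hrat (1 / q) (by positivity) (1 / a) (by
    push_cast
    exact one_div_lt_one_div_of_lt ha0 haq)
  push_cast at h
  rw [hinv q hq0, hinv a ha0, one_div_lt_one_div (hpos _ hq0.le) (hpos _ ha0.le)] at h
  exact h.trans (hrat q hq0'.le b hqb)

end IsConjugation

/-- The space of curves on `[0, 1]` on which the renormalization operator acts. -/
structure IsCurve (p : ℝ) (f : ℝ → ℝ) : Prop where
  continuousOn : ContinuousOn f (Icc 0 1)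
  mem : ∀ t ∈ Icc (0 : ℝ) 1, f t ∈ Icc (p - 1) (1 / (p - 1))
  map_zero : f 0 = p - 1
  map_one : f 1 = 1 / (p - 1)

/-- The inverse of `t ↦ t / (1 + t)`, extended by `1` to the right of `1 / 2`. -/
noncomputable def leftParam (t : ℝ) : ℝ := min t (1 / 2) / (1 - min t (1 / 2))

/-- The inverse of `t ↦ 1 / (2 - t)`, extended by `0` to the left of `1 / 2`. -/
noncomputable def rightParam (t : ℝ) : ℝ := (2 * max t (1 / 2) - 1) / max t (1 / 2)

/-- The renormalization operator whose fixed point is the conjugation in the coordinate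
`t = x / (1 + x)`: for an `IsCurve`, one of the first two summands
equals `1` on each half of `[0, 1]`. -/
noncomputable def renorm (p : ℝ) (f : ℝ → ℝ) (t : ℝ) : ℝ :=
  p * f (leftParam t) / (f (leftParam t) + 1) + (f (rightParam t) + 1) / p - 1

theorem leftParam_mem {t : ℝ} (ht : t ∈ Icc (0 : ℝ) 1) : leftParam t ∈ Icc (0 : ℝ) 1 := by
  have h1 : min t (1 / 2) ≤ 1 / 2 := min_le_right _ _
  have h2 : 0 ≤ min t (1 / 2) := le_min ht.1 (by norm_num)
  refine ⟨div_nonneg h2 (by linarith), ?_⟩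
  rw [leftParam, div_le_one (by linarith)]
  linarith

theorem rightParam_mem {t : ℝ} (ht : t ∈ Icc (0 : ℝ) 1) : rightParam t ∈ Icc (0 : ℝ) 1 := by
  have h1 : 1 / 2 ≤ max t (1 / 2) := le_max_right _ _
  have h2 : max t (1 / 2) ≤ 1 := max_le ht.2 (by norm_num)
  refine ⟨div_nonneg (by linarith) (by linarith), ?_⟩
  rw [rightParam, div_le_one (by linarith)]
  linarith

theorem continuous_leftParam : Continuous leftParam := by
  unfold leftParam
  refine Continuous.div (by fun_prop) (by fun_prop) fun t => ?_
  have : min t (1 / 2) ≤ 1 / 2 := min_le_right _ _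
  linarith

theorem continuous_rightParam : Continuous rightParam := by
  unfold rightParam
  refine Continuous.div (by fun_prop) (by fun_prop) fun t => ?_
  have : 1 / 2 ≤ max t (1 / 2) := le_max_right _ _
  linarith

theorem leftParam_of_ge {t : ℝ} (ht : 1 / 2 ≤ t) : leftParam t = 1 := by
  rw [leftParam, min_eq_right ht]
  norm_num

theorem rightParam_of_le {t : ℝ} (ht : t ≤ 1 / 2) : rightParam t = 0 := by
  rw [rightParam, max_eq_right ht]
  norm_num

variable {p : ℝ} {f g : ℝ → ℝ}

theorem renorm_of_le (hp : 1 < p) (hf : IsCurve p f) {t : ℝ} (ht : t ≤ 1 / 2) :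
    renorm p f t = p * f (leftParam t) / (f (leftParam t) + 1) := by
  rw [renorm, rightParam_of_le ht, hf.map_zero, sub_add_cancel, div_self (by linarith),
    add_sub_cancel_right]

theorem renorm_of_ge (hp : 1 < p) (hf : IsCurve p f) {t : ℝ} (ht : 1 / 2 ≤ t) :
    renorm p f t = (f (rightParam t) + 1) / p := by
  have hp' : 0 < p - 1 := by linarith
  have h : p * (1 / (p - 1)) / (1 / (p - 1) + 1) = 1 := by
    rw [div_eq_one_iff_eq (by positivity)]
    field_simp
    ring
  rw [renorm, leftParam_of_ge ht, hf.map_one, h]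
  ring

theorem renorm_apply_left (hp : 1 < p) (hf : IsCurve p f) {t : ℝ} (ht : t ∈ Icc (0 : ℝ) 1) :
    renorm p f (t / (1 + t)) = p * f t / (f t + 1) := by
  obtain ⟨h0, h1⟩ := ht
  have h : t / (1 + t) ≤ 1 / 2 := by
    rw [div_le_div_iff₀ (by linarith) (by norm_num)]
    linarith
  have h' : leftParam (t / (1 + t)) = t := by
    rw [leftParam, min_eq_left h]
    field_simp
    ring
  rw [renorm_of_le hp hf h, h']

theorem renorm_apply_right (hp : 1 < p) (hf : IsCurve p f) {t : ℝ} (ht : t ∈ Icc (0 : ℝ) 1) :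
    renorm p f (1 / (2 - t)) = (f t + 1) / p := by
  obtain ⟨h0, h1⟩ := ht
  have h2 : 0 < 2 - t := by linarith
  have h : 1 / 2 ≤ 1 / (2 - t) := one_div_le_one_div_of_le h2 (by linarith)
  have h' : rightParam (1 / (2 - t)) = t := by
    rw [rightParam, max_eq_left h]
    field_simp
    ring
  rw [renorm_of_ge hp hf h, h']

theorem IsCurve.renorm (hp1 : 1 < p) (hp2 : p < 2) (hf : IsCurve p f) :
    IsCurve p (renorm p f) := by
  have hp : 0 < p - 1 := by linarith
  have hone : 1 < 1 / (p - 1) := by rw [lt_div_iff₀ hp]; linarith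
  refine ⟨?_, ?_, ?_, ?_⟩
  · have hl := hf.continuousOn.comp continuous_leftParam.continuousOn fun t ht => leftParam_mem ht
    have hr := hf.continuousOn.comp continuous_rightParam.continuousOn
      fun t ht => rightParam_mem ht
    refine (((continuousOn_const.mul hl).div (hl.add continuousOn_const) fun t ht => ?_).add
      ((hr.add continuousOn_const).div_const p)).sub continuousOn_const
    have := (hf.mem _ (leftParam_mem ht)).1
    simp only [Pi.add_apply, Function.comp_apply]
    linarith
  · intro t ht
    rcases le_total t (1 / 2) with h | h
    · obtain ⟨h1, h2⟩ := hf.mem _ (leftParam_mem ht)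
      rw [le_div_iff₀ hp] at h2
      rw [renorm_of_le hp1 hf h]
      refine ⟨?_, le_trans ?_ hone.le⟩
      · rw [le_div_iff₀ (by linarith)]; linarith
      · rw [div_le_one (by linarith)]; linarith
    · obtain ⟨h1, h2⟩ := hf.mem _ (rightParam_mem ht)
      rw [le_div_iff₀ hp] at h2
      rw [renorm_of_ge hp1 hf h]
      constructor
      · rw [le_div_iff₀ (by linarith)]; nlinarith
      · rw [div_le_div_iff₀ (by linarith) hp]; linarith
  · have h := renorm_apply_left hp1 hf (t := 0) (by simp)
    rw [zero_div, hf.map_zero] at h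
    rw [h]
    field_simp
    ring
  · have h := renorm_apply_right hp1 hf (t := 1) (by simp)
    norm_num [hf.map_one] at h
    rw [h]
    field_simp
    ring

theorem abs_renorm_sub_le (hp1 : 1 < p) (hf : IsCurve p f) (hg : IsCurve p g) {D : ℝ}
    (hD : ∀ t ∈ Icc (0 : ℝ) 1, |f t - g t| ≤ D) {t : ℝ} (ht : t ∈ Icc (0 : ℝ) 1) :
    |renorm p f t - renorm p g t| ≤ D * p⁻¹ := by
  have hp : 0 < p := by linarith
  rcases le_total t (1 / 2) with h | h
  · rw [renorm_of_le hp1 hf h, renorm_of_le hp1 hg h]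
    have hs := leftParam_mem ht
    set s := leftParam t
    have h1 := (hf.mem s hs).1
    have h2 := (hg.mem s hs).1
    have hf1 : 0 < f s + 1 := by linarith
    have hg1 : 0 < g s + 1 := by linarith
    have hD' := hD s hs
    have heq : p * f s / (f s + 1) - p * g s / (g s + 1) =
        (f s - g s) * (p / ((f s + 1) * (g s + 1))) := by
      field_simp
      ring
    have hle : p / ((f s + 1) * (g s + 1)) ≤ p⁻¹ := by
      rw [inv_eq_one_div, div_le_div_iff₀ (by positivity) hp, one_mul]
      exact mul_le_mul (by linarith) (by linarith) hp.le hf1.le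
    rw [heq, abs_mul, abs_of_pos (show 0 < p / ((f s + 1) * (g s + 1)) by positivity)]
    exact mul_le_mul hD' hle (by positivity) ((abs_nonneg _).trans hD')
  · rw [renorm_of_ge hp1 hf h, renorm_of_ge hp1 hg h]
    have hD' := hD _ (rightParam_mem ht)
    have heq : (f (rightParam t) + 1) / p - (g (rightParam t) + 1) / p =
        (f (rightParam t) - g (rightParam t)) * p⁻¹ := by
      field_simp
      ring
    rw [heq, abs_mul, abs_of_pos (inv_pos.mpr hp)]
    gcongr

theorem exists_isCurve (hp1 : 1 < p) (hp2 : p < 2) : ∃ f, IsCurve p f := by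
  have hp : 0 < p - 1 := by linarith
  have hone : 1 < 1 / (p - 1) := by rw [lt_div_iff₀ hp]; linarith
  refine ⟨fun t => (p - 1) + t * (1 / (p - 1) - (p - 1)), by fun_prop, ?_, by ring, by ring⟩
  rintro t ⟨h0, h1⟩
  constructor <;> nlinarith

theorem exists_isCurve_fixed (hp1 : 1 < p) (hp2 : p < 2) : ∃ f, IsCurve p f ∧
    (∀ t ∈ Icc (0 : ℝ) 1, f (t / (1 + t)) = p * f t / (f t + 1)) ∧
    (∀ t ∈ Icc (0 : ℝ) 1, f (1 / (2 - t)) = (f t + 1) / p) := by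
  have hp : 0 < p - 1 := by linarith
  obtain ⟨f₀, hf₀⟩ := exists_isCurve hp1 hp2
  set F : ℕ → ℝ → ℝ := fun n => (renorm p)^[n] f₀
  have hFs : ∀ n, F (n + 1) = renorm p (F n) := fun n => Function.iterate_succ_apply' _ _ _
  have hF : ∀ n, IsCurve p (F n) := by
    intro n
    induction n with
    | zero => exact hf₀
    | succ n ih => rw [hFs]; exact ih.renorm hp1 hp2
  set D := 1 / (p - 1) - (p - 1)
  have hr : p⁻¹ < 1 := inv_lt_one_of_one_lt₀ hp1
  have hstep : ∀ n, ∀ t ∈ Icc (0 : ℝ) 1, |F n t - F (n + 1) t| ≤ D * p⁻¹ ^ n := by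
    intro n
    induction n with
    | zero =>
      intro t ht
      obtain ⟨h1, h2⟩ := (hF 0).mem t ht
      obtain ⟨h3, h4⟩ := (hF (0 + 1)).mem t ht
      rw [pow_zero, mul_one, abs_le]
      constructor <;> linarith
    | succ n ih =>
      intro t ht
      rw [hFs n, hFs (n + 1), pow_succ, ← mul_assoc]
      exact abs_renorm_sub_le hp1 (hF n) (hF (n + 1)) ih ht
  have hlim : ∀ t, ∃ l, t ∈ Icc (0 : ℝ) 1 → Tendsto (fun n => F n t) atTop (𝓝 l) := by
    intro t
    by_cases ht : t ∈ Icc (0 : ℝ) 1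
    · obtain ⟨l, hl⟩ := cauchySeq_tendsto_of_complete
        (cauchySeq_of_le_geometric (f := fun n => F n t) p⁻¹ D hr fun n => hstep n t ht)
      exact ⟨l, fun _ => hl⟩
    · exact ⟨0, fun h => absurd h ht⟩
  choose f hf using hlim
  have hunif : TendstoUniformlyOn F f atTop (Icc 0 1) := by
    rw [Metric.tendstoUniformlyOn_iff]
    intro ε hε
    have h0 : Tendsto (fun n : ℕ => D * p⁻¹ ^ n / (1 - p⁻¹)) atTop (𝓝 0) := by
      have := ((tendsto_pow_atTop_nhds_zero_of_lt_one (by positivity) hr).const_mul D).div_const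
        (1 - p⁻¹)
      simpa using this
    filter_upwards [h0.eventually_lt_const hε] with n hn t ht
    rw [dist_comm]
    exact (dist_le_of_le_geometric_of_tendsto p⁻¹ D hr (fun n => hstep n t ht) (hf t ht) n).trans_lt
      hn
  have hmem : ∀ t ∈ Icc (0 : ℝ) 1, f t ∈ Icc (p - 1) (1 / (p - 1)) := fun t ht =>
    isClosed_Icc.mem_of_tendsto (hf t ht) (Eventually.of_forall fun n => (hF n).mem t ht)
  have hcurve : IsCurve p f :=
    { continuousOn := hunif.continuousOn
        (Eventually.of_forall fun n => (hF n).continuousOn).frequently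
      mem := hmem
      map_zero := tendsto_nhds_unique (hf 0 (by simp)) (by simp [(hF _).map_zero])
      map_one := tendsto_nhds_unique (hf 1 (by simp)) (by simp [(hF _).map_one]) }
  refine ⟨f, hcurve, fun t ht => ?_, fun t ht => ?_⟩
  · have hs : t / (1 + t) ∈ Icc (0 : ℝ) 1 := by
      obtain ⟨h0, h1⟩ := ht
      refine ⟨by positivity, ?_⟩
      rw [div_le_one (by linarith)]
      linarith
    refine tendsto_nhds_unique ((hf _ hs).comp (tendsto_add_atTop_nat 1)) ?_
    have h := ((hf t ht).const_mul p).div ((hf t ht).add_const 1)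
      (by have := (hmem t ht).1; linarith)
    refine h.congr fun n => ?_
    simp only [Function.comp_apply, hFs, Pi.div_apply]
    exact (renorm_apply_left hp1 (hF n) ht).symm
  · have hs : 1 / (2 - t) ∈ Icc (0 : ℝ) 1 := by
      obtain ⟨h0, h1⟩ := ht
      refine ⟨one_div_nonneg.mpr (by linarith), ?_⟩
      rw [div_le_one (by linarith)]
      linarith
    refine tendsto_nhds_unique ((hf _ hs).comp (tendsto_add_atTop_nat 1)) ?_
    refine (((hf t ht).add_const 1).div_const p).congr fun n => ?_
    simp only [Function.comp_apply, hFs]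
    exact (renorm_apply_right hp1 (hF n) ht).symm

end ConjugationMap

open ConjugationMap

theorem exists_unique_conjugation_map (p : ℝ) (hp1 : 1 < p) (hp2 : p < 2) :
    ∃ X : ℝ → ℝ,
      (ContinuousOn X (Set.Ici 0) ∧ X 1 = 1 ∧
        (∀ x : ℝ, 0 ≤ x → X (x + 1) = (X x + 1) / p) ∧
        (∀ x : ℝ, 0 ≤ x → X (x / (x + 1)) = p * X x / (X x + 1))) ∧
      (∀ Y : ℝ → ℝ,
        (ContinuousOn Y (Set.Ici 0) ∧ Y 1 = 1 ∧
          (∀ x : ℝ, 0 ≤ x → Y (x + 1) = (Y x + 1) / p) ∧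
          (∀ x : ℝ, 0 ≤ x → Y (x / (x + 1)) = p * Y x / (Y x + 1))) →
        Set.EqOn Y X (Set.Ici 0)) ∧
      StrictMonoOn X (Set.Ici 0) ∧
      X 0 = p - 1 ∧
      (∀ x : ℝ, 0 < x → X (1 / x) = 1 / X x) ∧
      X '' (Set.Ici 0) = Set.Ico (p - 1) (1 / (p - 1)) := by
  have hp : 0 < p - 1 := by linarith
  obtain ⟨f, hf, hleft, hright⟩ := exists_isCurve_fixed hp1 hp2
  have hparam : ∀ x : ℝ, 0 ≤ x → x / (1 + x) ∈ Icc (0 : ℝ) 1 := by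
    intro x hx
    refine ⟨by positivity, ?_⟩
    rw [div_le_one (by linarith)]
    linarith
  set X : ℝ → ℝ := fun x => f (x / (1 + x)) with hXdef
  have hXc : ContinuousOn X (Ici 0) := by
    refine hf.continuousOn.comp (ContinuousOn.div (by fun_prop) (by fun_prop) ?_) hparam
    intro x hx
    have := mem_Ici.mp hx
    linarith
  have hmem : ∀ x, 0 ≤ x → X x ∈ Icc (p - 1) (1 / (p - 1)) := fun x hx => hf.mem _ (hparam x hx)
  have hX : IsConjugation p X := by
    refine ⟨?_, fun x hx => ?_, fun x hx => ?_⟩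
    · have h := hright 0 (by simp)
      rw [hf.map_zero, sub_add_cancel, div_self (by linarith)] at h
      norm_num at h
      norm_num [hXdef, h]
    · rw [hXdef]
      simp only
      rw [← hright _ (hparam x hx)]
      congr 1
      have : 2 - x / (1 + x) = (x + 2) / (1 + x) := by field_simp; ring
      rw [this, one_div_div]
      congr 1 <;> ring
    · rw [hXdef]
      simp only
      rw [← hleft _ (hparam x hx), add_comm x 1]
  have hpos : ∀ x, 0 ≤ x → 0 < X x := fun x hx => hp.trans_le (hmem x hx).1
  refine ⟨X, ⟨hXc, hX.map_one, hX.map_add_one, hX.map_div_add_one⟩, ?_,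
    hX.strictMonoOn hp1 hp2 hXc hmem, hX.map_zero hp1, fun x hx => hX.map_inv hp1 hXc hpos hx, ?_⟩
  · rintro Y ⟨hYc, hY1, hY2, hY3⟩
    exact hX.eqOn ⟨hY1, hY2, hY3⟩ hp1 hXc hYc
  · apply Subset.antisymm
    · rintro _ ⟨x, hx, rfl⟩
      exact ⟨(hmem x hx).1, hX.map_lt hp1 hp2 hmem hx⟩
    · rintro y ⟨hy1, hy2⟩
      obtain ⟨t, ⟨ht0, ht1⟩, rfl⟩ := intermediate_value_Icc zero_le_one hf.continuousOn
        (show y ∈ Icc (f 0) (f 1) by rw [hf.map_zero, hf.map_one]; exact ⟨hy1, hy2.le⟩)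
      have ht : t < 1 := lt_of_le_of_ne ht1 fun h => by
        rw [h, hf.map_one] at hy2
        exact lt_irrefl _ hy2
      have ht' : 0 < 1 - t := by linarith
      refine ⟨t / (1 - t), div_nonneg ht0 ht'.le, ?_⟩
      rw [hXdef]
      simp only
      congr 1
      field_simp
      ring
end

section
/- Let p be real with 1 < p < 2 and let X : [0,∞) → ℝ be the unique continuous function with X(1) = 1 satisfying X(x+1) = (X(x)+1)/p and X(x/(x+1)) = p·X(x)/(X(x)+1) for all x ≥ 0. Then X((1+√5)/2) = (1 + √(1+4p))/(2p). -/
open Set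

/-- The map `x ↦ x / (x + 1) + 1` contracts distances to its fixed point on `[0, ∞)`. -/
lemma abs_div_add_one_sub_le {φ x : ℝ} (hφ : 1 ≤ φ) (hφφ : φ ^ 2 = φ + 1) (hx : 0 ≤ x) :
    |x / (x + 1) + 1 - φ| ≤ |x - φ| / 2 := by
  have h : x / (x + 1) + 1 - φ = (x - φ) / ((x + 1) * (φ + 1)) := by
    field_simp
    linear_combination (-x - 1) * hφφ
  rw [h, abs_div, abs_of_pos (by positivity : 0 < (x + 1) * (φ + 1))]
  gcongr
  nlinarith

/-- Positive values of `X` occur arbitrarily close to the golden ratio. -/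
lemma exists_pos_near_fixedPoint {p φ : ℝ} (hp : 0 < p) {X : ℝ → ℝ} (hone : X 1 = 1)
    (hfe1 : ∀ x : ℝ, 0 ≤ x → X (x + 1) = (X x + 1) / p)
    (hfe2 : ∀ x : ℝ, 0 ≤ x → X (x / (x + 1)) = p * X x / (X x + 1))
    (hφ : 1 ≤ φ) (hφφ : φ ^ 2 = φ + 1) (n : ℕ) :
    ∃ x, 0 ≤ x ∧ 0 < X x ∧ |x - φ| ≤ (1 / 2) ^ n := by
  induction n with
  | zero =>
    refine ⟨1, zero_le_one, by simp [hone], ?_⟩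
    rw [pow_zero, abs_le]
    constructor <;> nlinarith
  | succ n ih =>
    obtain ⟨x, hx, hX, hd⟩ := ih
    refine ⟨x / (x + 1) + 1, by positivity, ?_, ?_⟩
    · rw [hfe1 _ (by positivity), hfe2 x hx]
      positivity
    · have := abs_div_add_one_sub_le hφ hφφ hx
      rw [pow_succ]
      linarith

theorem conjugation_map_golden_ratio (p : ℝ) (hp1 : 1 < p) (hp2 : p < 2)
    (X : ℝ → ℝ)
    (hcont : ContinuousOn X (Set.Ici 0))
    (hone : X 1 = 1)
    (hfe1 : ∀ x : ℝ, 0 ≤ x → X (x + 1) = (X x + 1) / p)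
    (hfe2 : ∀ x : ℝ, 0 ≤ x → X (x / (x + 1)) = p * X x / (X x + 1)) :
    X ((1 + Real.sqrt 5) / 2) = (1 + Real.sqrt (1 + 4 * p)) / (2 * p) := by
  have hs5 : Real.sqrt 5 ^ 2 = 5 := Real.sq_sqrt (by norm_num)
  have hs5' : 1 ≤ Real.sqrt 5 := Real.one_le_sqrt.2 (by norm_num)
  set φ := (1 + Real.sqrt 5) / 2 with hφdef
  have hφ : 1 ≤ φ := by linarith
  have hφφ : φ ^ 2 = φ + 1 := by rw [hφdef]; linear_combination hs5 / 4
  have hp : 0 < p := by linarith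
  have hnonneg : 0 ≤ X φ := by
    choose u hu hXu hd using exists_pos_near_fixedPoint hp hone hfe1 hfe2 hφ hφφ
    have hlim : Filter.Tendsto u Filter.atTop (nhds φ) := by
      rw [tendsto_iff_dist_tendsto_zero]
      exact squeeze_zero (fun _ => dist_nonneg) hd
        (tendsto_pow_atTop_nhds_zero_of_lt_one (by norm_num) (by norm_num))
    have hat : ContinuousAt X φ := hcont.continuousAt (Ici_mem_nhds (by linarith))
    exact ge_of_tendsto' (hat.tendsto.comp hlim) fun n => (hXu n).le
  have hfix : φ / (φ + 1) + 1 = φ := by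
    field_simp
    linear_combination -hφφ
  have hX : X φ = (p * X φ / (X φ + 1) + 1) / p := by
    rw [← hfe2 φ (by linarith), ← hfe1 _ (by positivity), hfix]
  have hquad : p * X φ ^ 2 = X φ + 1 := by
    generalize X φ = y at hnonneg hX
    field_simp at hX
    linarith
  have hsqrt : Real.sqrt (1 + 4 * p) = 2 * p * X φ - 1 := by
    rw [show 1 + 4 * p = (2 * p * X φ - 1) ^ 2 by linear_combination -4 * p * hquad]
    refine Real.sqrt_sq ?_
    by_contra! h
    nlinarith
  rw [hsqrt]
  field_simp
  ring
end

section
/- Let n ≥ 1 be an integer and let P ∈ ℚ[X] be a polynomial of degree at most n−1. Write P = ∑_{i=0}^{n−1} c_i X^i and define the polynomial ℒ(P)(X) = P(X+1) − 2^{−(n+1)}·P(2X) + (−1)^{n+1}·2^{−(n+1)}·∑_{i=0}^{n−1} c_i·2^i·X^{n−1−i} (so that the last sum equals z^{n−1}·P(2/z) for z ≠ 0). If ℒ(P) is the zero polynomial, then P is the zero polynomial; in other words, the ℚ-linear map ℒ on the space of polynomials of degree ≤ n−1 is injective (hence an isomorphism). -/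
open Polynomial Finset

/-- Away from `0`, the reversed sum of the coefficients is `z ^ (n - 1) * P (2 / z)`. -/
theorem eval_sum_coeff_mul_two_pow {n : ℕ} {P : ℚ[X]} (h : P.natDegree < n) {z : ℚ}
    (hz : z ≠ 0) :
    (∑ i ∈ Finset.range n, C (P.coeff i * 2 ^ i) * X ^ (n - 1 - i)).eval z =
      z ^ (n - 1) * P.eval (2 / z) := by
  rw [eval_eq_sum_range' h, eval_finsetSum, Finset.mul_sum]
  refine Finset.sum_congr rfl fun i hi => ?_
  have hi' : i ≤ n - 1 := Nat.le_sub_one_of_lt (Finset.mem_range.1 hi)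
  rw [eval_mul, eval_C, eval_pow, eval_X, div_pow, pow_sub₀ z hz hi']
  ring

theorem L_map_injective (n : ℕ) (hn : 1 ≤ n) (P : Polynomial ℚ)
    (hdeg : P.natDegree ≤ n - 1)
    (hLP : P.comp (Polynomial.X + 1)
        - Polynomial.C (((2 : ℚ) ^ (n + 1))⁻¹) * P.comp (2 * Polynomial.X)
        + Polynomial.C ((-1 : ℚ) ^ (n + 1) * ((2 : ℚ) ^ (n + 1))⁻¹) *
            ∑ i ∈ Finset.range n, Polynomial.C (P.coeff i * 2 ^ i) * Polynomial.X ^ (n - 1 - i)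
      = 0) :
    P = 0 := by
  by_contra hP
  obtain ⟨R, hR, hndvd⟩ := exists_eq_pow_rootMultiplicity_mul_and_not_dvd P hP 2
  have hm : P.rootMultiplicity 2 ≤ n - 1 := by
    refine le_trans ?_ hdeg
    exact (Multiset.count_le_card _ _).trans (P.card_roots') |>.trans' (count_roots P).ge
  generalize P.rootMultiplicity 2 = m at hR hm
  have hR2 : R.eval 2 ≠ 0 := fun h => hndvd (dvd_iff_isRoot.2 h)
  have hPe (x : ℚ) : P.eval x = (x - 2) ^ m * R.eval x := by
    rw [hR]; simp
  -- The equation divided by `(z - 1) ^ m`, which extends continuously to `z = 1`.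
  let f : ℚ → ℚ := fun z => R.eval (z + 1) - (2 ^ (n + 1))⁻¹ * (2 ^ m * R.eval (2 * z))
    + (-1) ^ (n + 1) * (2 ^ (n + 1))⁻¹ * ((-2) ^ m * (z ^ (n - 1) / z ^ m * R.eval (2 / z)))
  have hf0 : ∀ z : ℚ, z ≠ 0 → z ≠ 1 → f z = 0 := by
    intro z hz hz1
    have h := congrArg (eval z) hLP
    rw [eval_add, eval_sub, eval_mul, eval_mul, eval_sum_coeff_mul_two_pow (by omega) hz] at h
    simp only [eval_comp, eval_add, eval_mul, eval_X, eval_one, eval_C, eval_ofNat, eval_zero,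
      hPe] at h
    have e1 : z + 1 - 2 = z - 1 := by ring
    have e2 : 2 * z - 2 = 2 * (z - 1) := by ring
    have e3 : 2 / z - 2 = -2 * (z - 1) / z := by field_simp; ring
    rw [e1, e2, e3, div_pow, mul_pow, mul_pow] at h
    refine (mul_eq_zero.1 ?_).resolve_left (pow_ne_zero m (sub_ne_zero.2 hz1))
    rw [← h]
    simp only [f]
    ring
  have hcont : ContinuousAt f 1 := by
    have hdiv : ContinuousAt (fun z : ℚ => 2 / z) 1 :=
      continuousAt_const.div continuousAt_id one_ne_zero
    have hRdiv : ContinuousAt (fun z : ℚ => R.eval (2 / z)) 1 :=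
      R.continuous.continuousAt.comp hdiv
    have hpow : ContinuousAt (fun z : ℚ => z ^ (n - 1) / z ^ m) 1 :=
      (continuous_pow _).continuousAt.div (continuous_pow _).continuousAt (by simp)
    have hadd : Continuous fun z : ℚ => R.eval (z + 1) := R.continuous.comp (by fun_prop)
    have hmul : Continuous fun z : ℚ => R.eval (2 * z) := R.continuous.comp (by fun_prop)
    exact (hadd.continuousAt.sub (continuousAt_const.mul
      (continuousAt_const.mul hmul.continuousAt))).add
      (continuousAt_const.mul (continuousAt_const.mul (hpow.mul hRdiv)))
  have hf1 : f 1 = 0 := by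
    refine tendsto_nhds_unique (hcont.tendsto.mono_left (nhdsWithin_le_nhds (s := {1}ᶜ))) ?_
    refine tendsto_const_nhds.congr' ?_
    filter_upwards [self_mem_nhdsWithin,
      nhdsWithin_le_nhds (isOpen_ne.mem_nhds (one_ne_zero (α := ℚ)))] with z hz1 hz
    exact (hf0 z hz hz1).symm
  obtain ⟨k, rfl⟩ : ∃ k, n = m + k + 1 := ⟨n - 1 - m, by omega⟩
  have hfactor : f 1 = R.eval 2 * (1 - (2 ^ (k + 2))⁻¹ * (1 - (-1) ^ (k + 2))) := by
    have hsq : ((-1 : ℚ) ^ m) * (-1) ^ m = 1 := by rw [← mul_pow]; simp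
    have h2 : (2 : ℚ) ^ m ≠ 0 := by positivity
    simp only [f, one_add_one_eq_two, one_pow, mul_one, div_one, one_mul, neg_pow (2 : ℚ) m,
      show m + k + 1 + 1 = m + (k + 2) by ring, pow_add _ m (k + 2)]
    field_simp
    linear_combination (-1) ^ (k + 2) * hsq
  have hk : ((2 : ℚ) ^ (k + 2))⁻¹ ≤ 1 / 4 := by
    rw [inv_le_comm₀ (by positivity) (by norm_num), pow_add]
    linarith [one_le_pow₀ (one_le_two (α := ℚ)) (n := k)]
  rw [hfactor] at hf1
  have hzero := (mul_eq_zero.1 hf1).resolve_left hR2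
  rcases neg_one_pow_eq_or ℚ (k + 2) with h | h <;> rw [h] at hzero <;> linarith
end

section
/- Let Υ : ℂ ∖ {1} → ℂ be analytic. Suppose H₁ and H₂ are analytic functions on ℂ ∖ {2} such that H_i(z) → 0 as |z| → ∞ for i = 1,2, and such that H_i(z+1) − H_i(2z) + H_i(2/z)/z² = Υ(z) for every z ∈ ℂ ∖ {0, 1} and i = 1,2. Then H₁ = H₂ on ℂ ∖ {2}. -/
open Set Filter Bornology

/-- A continuous solution of `T u = (T (u / 2) - T (-(u + 1) / 2)) / 4` vanishes: both inner maps
preserve every closed disc of radius at least one, on which `‖T‖` attains its maximum. -/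
lemma eq_zero_of_contracting_equation {T : ℂ → ℂ} (hT : Continuous T)
    (h : ∀ u, T u = (T (u / 2) - T (-(u + 1) / 2)) / 4) (u : ℂ) : T u = 0 := by
  set R : ℝ := max 1 ‖u‖ with hR
  have hR1 : 1 ≤ R := le_max_left _ _
  have hu : u ∈ Metric.closedBall (0 : ℂ) R := by simp [hR]
  obtain ⟨v, hv, hmax⟩ := (isCompact_closedBall (0 : ℂ) R).exists_isMaxOn ⟨u, hu⟩
    hT.norm.continuousOn
  rw [mem_closedBall_zero_iff] at hv
  have h₁ : ‖T (v / 2)‖ ≤ ‖T v‖ := hmax <| by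
    rw [mem_closedBall_zero_iff, norm_div, Complex.norm_ofNat]
    linarith [norm_nonneg v]
  have h₂ : ‖T (-(v + 1) / 2)‖ ≤ ‖T v‖ := hmax <| by
    rw [mem_closedBall_zero_iff, norm_div, norm_neg, Complex.norm_ofNat]
    have := norm_add_le v 1
    rw [norm_one] at this
    linarith
  have h₃ : ‖T v‖ ≤ (‖T (v / 2)‖ + ‖T (-(v + 1) / 2)‖) / 4 := by
    conv_lhs => rw [h v, norm_div, Complex.norm_ofNat]
    gcongr
    exact norm_sub_le _ _
  have h₄ : ‖T u‖ ≤ ‖T v‖ := hmax hu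
  exact norm_le_zero_iff.mp (by linarith)

/-- The homogeneous three-term equation has no nonzero solution continuous on `ℂ ∖ {2}`. -/
lemma eq_zero_of_three_term_equation {H : ℂ → ℂ} (hH : ∀ w, w ≠ 2 → ContinuousAt H w)
    (heq : ∀ z : ℂ, z ≠ 0 → z ≠ 1 → H (z + 1) - H (2 * z) + H (2 / z) / z ^ 2 = 0)
    {w : ℂ} (hw : w ≠ 2) : H w = 0 := by
  set F : ℂ → ℂ := fun u => H (2 + 1 / u) / u ^ 2 with hF
  set T : ℂ → ℂ := Function.update F 0 (4 * (H 0 - H 1)) with hTdef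
  have hTF : ∀ u, u ≠ 0 → T u = H (2 + 1 / u) / u ^ 2 := fun u hu => by
    simp [hTdef, hF, hu]
  have hcont : Continuous T := by
    rw [continuous_iff_continuousAt]
    intro u
    rcases eq_or_ne u 0 with rfl | hu
    · rw [hTdef, continuousAt_update_same]
      set Z : ℂ → ℂ := fun u => 2 * u / (2 * u + 1) with hZ
      have hZc : ContinuousAt Z 0 := by
        apply ContinuousAt.div <;> first | fun_prop | simp
      have hZ0 : Z 0 = 0 := by simp [hZ]
      have hG : ContinuousAt
          (fun u => (H (2 * Z u) - H (Z u + 1)) * (4 / (2 * u + 1) ^ 2)) 0 := by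
        have h₁ : ContinuousAt (fun u => H (2 * Z u)) 0 :=
          ContinuousAt.comp (g := H) (f := fun u => 2 * Z u)
            (hH _ (by simp [hZ0])) (by fun_prop)
        have h₂ : ContinuousAt (fun u => H (Z u + 1)) 0 :=
          ContinuousAt.comp (g := H) (f := fun u => Z u + 1)
            (hH _ (by simp [hZ0])) (by fun_prop)
        refine (h₁.sub h₂).mul (ContinuousAt.div ?_ ?_ ?_) <;> first | fun_prop | simp
      have hlim := hG.tendsto.mono_left (nhdsWithin_le_nhds (s := {0}ᶜ))
      simp only [hZ0, mul_zero, zero_add, one_pow, div_one] at hlim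
      rw [mul_comm] at hlim
      refine hlim.congr' ?_
      have hne : ∀ᶠ u : ℂ in nhdsWithin 0 {0}ᶜ, 2 * u + 1 ≠ 0 :=
        nhdsWithin_le_nhds <| ContinuousAt.eventually_ne (by fun_prop) (by simp)
      filter_upwards [hne, self_mem_nhdsWithin] with u hu1 hu
      have hu0 : u ≠ 0 := hu
      have h := heq (Z u) (by simp [hZ, hu0, hu1]) (by
        simp only [hZ, ne_eq, div_eq_one_iff_eq hu1]
        simp)
      have harg : 2 / Z u = 2 + 1 / u := by simp only [hZ]; field_simp
      rw [harg] at h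
      have h' : H (2 * Z u) - H (Z u + 1) = H (2 + 1 / u) / Z u ^ 2 := by linear_combination -h
      rw [h']
      simp only [hZ, hF]
      field_simp
      ring
    · rw [hTdef, continuousAt_update_of_ne hu]
      refine ContinuousAt.div ?_ (by fun_prop) (pow_ne_zero 2 hu)
      refine ContinuousAt.comp (g := H) (f := fun u => 2 + 1 / u) (hH _ (by simp [hu])) ?_
      exact continuousAt_const.add (continuousAt_const.div continuousAt_id hu)
  have hT : T = fun u => (T (u / 2) - T (-(u + 1) / 2)) / 4 := by
    have hdense : Dense ({0, -1}ᶜ : Set ℂ) := (Set.toFinite {0, -1}).countable.dense_compl ℂ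
    refine hcont.ext_on hdense (by fun_prop) ?_
    intro u hu
    simp only [mem_compl_iff, mem_insert_iff, mem_singleton_iff, not_or] at hu
    obtain ⟨hu0, hu1⟩ := hu
    have hu1' : u + 1 ≠ 0 := fun h => hu1 (eq_neg_of_add_eq_zero_left h)
    have hz : 1 + 1 / u = (u + 1) / u := by field_simp
    have h := heq (1 + 1 / u) (hz ▸ div_ne_zero hu1' hu0) (by simp [hu0])
    have h₁ : 1 + 1 / u + 1 = 2 + 1 / u := by ring
    have h₂ : 2 * (1 + 1 / u) = 2 + 1 / (u / 2) := by field_simp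
    have h₃ : 2 / (1 + 1 / u) = 2 + 1 / (-(u + 1) / 2) := by field_simp; ring
    rw [h₁, h₂, h₃, hz] at h
    simp only
    rw [hTF u hu0, hTF (u / 2) (by simpa using hu0),
      hTF (-(u + 1) / 2) (div_ne_zero (neg_ne_zero.mpr hu1') two_ne_zero)]
    generalize H (2 + 1 / u) = a at *
    generalize H (2 + 1 / (u / 2)) = b at *
    generalize H (2 + 1 / (-(u + 1) / 2)) = c at *
    field_simp at h ⊢
    linear_combination 4 * h
  have hw' : w - 2 ≠ 0 := sub_ne_zero.mpr hw
  have h := eq_zero_of_contracting_equation hcont (congrFun hT) (1 / (w - 2))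
  rw [hTF _ (one_div_ne_zero hw')] at h
  simpa [hw'] using h

theorem three_term_equation_unique_solution
    (Υ H₁ H₂ : ℂ → ℂ)
    (hΥ : AnalyticOnNhd ℂ Υ {(1 : ℂ)}ᶜ)
    (hH₁ : AnalyticOnNhd ℂ H₁ {(2 : ℂ)}ᶜ)
    (hH₂ : AnalyticOnNhd ℂ H₂ {(2 : ℂ)}ᶜ)
    (hlim₁ : Filter.Tendsto H₁ (Bornology.cobounded ℂ) (nhds 0))
    (hlim₂ : Filter.Tendsto H₂ (Bornology.cobounded ℂ) (nhds 0))
    (heq₁ : ∀ z : ℂ, z ≠ 0 → z ≠ 1 → H₁ (z + 1) - H₁ (2 * z) + H₁ (2 / z) / z ^ 2 = Υ z)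
    (heq₂ : ∀ z : ℂ, z ≠ 0 → z ≠ 1 → H₂ (z + 1) - H₂ (2 * z) + H₂ (2 / z) / z ^ 2 = Υ z) :
    Set.EqOn H₁ H₂ {(2 : ℂ)}ᶜ := by
  intro w hw
  refine sub_eq_zero.mp (eq_zero_of_three_term_equation (H := fun w => H₁ w - H₂ w)
    (fun w hw => (hH₁ w hw).continuousAt.sub (hH₂ w hw).continuousAt) ?_ hw)
  intro z hz0 hz1
  linear_combination heq₁ z hz0 hz1 - heq₂ z hz0 hz1
end
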